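/- Let R₃ be the unique positive root of R⁶+R⁵−4R⁴−8R³−10R²−6R−2 = 0 (R₃ ≈ 2.553). Then for all real x, y with 0 < x < R₃ and 0 < y < R₃, one has 2α(x,y)² + 3β(x,y)² − 4α(x,y)β(x,y) − 2α(x,y) + 2β(x,y) < 0. -/

import Mathlib

/-- The auxiliary function `α(x,y) = -d₁(x,y)/d₀(x,y)` of the BDF3 analysis. -/
noncomputable def alphaF (x y : ℝ) : ℝ :=
  x*(x^2*y^2 + 4*x*y^2 + 3*y^2 + 2*x*y + 3*y + 1) /
    ((y + 1)*(3*x^2*y + 4*x*y + 2*x + y + 1))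

/-- The auxiliary function `β(x,y) = d₂(x,y)/d₀(x,y)` of the BDF3 analysis. -/
noncomputable def betaF (x y : ℝ) : ℝ :=
  x*(x + 1)^2*y^2 / ((y + 1)*(3*x^2*y + 4*x*y + 2*x + y + 1))

/-!
For `x, y > 0` the quadratic expression in `α, β` is a positive multiple of `x(x+1) - B(x,y)`, where
`B` decreases in both variables. Since `x(x+1)` increases, the corner `(R₃,R₃)` of the square is the
worst case, and there `x(x+1) = B(x,y)` is exactly the equation defining `R₃`.
-/

/-- The bound `B(x,y)` for which the elliptic inequality at `x, y > 0` reads `x(x+1) < B(x,y)`. It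
is written in reciprocals to make its monotonicity visible, and is meaningful only for `y ≠ 0` and
`x ≠ -1`. -/
noncomputable def ellipticBound (x y : ℝ) : ℝ :=
  2 * (1 + 1 / y) ^ 2 * (2 + 1 / ((x + 1) * y)) * (1 + 1 / ((x + 1) * y))

lemma ellipticBound_le_ellipticBound {x x' y y' : ℝ} (hx : -1 < x) (hxx' : x ≤ x')
    (hy : 0 < y) (hyy' : y ≤ y') : ellipticBound x' y' ≤ ellipticBound x y := by
  have hx_add_one : 0 < x + 1 := by linarith
  have hx'_add_one : 0 < x' + 1 := by linarith
  have hy' : 0 < y' := hy.trans_le hyy'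
  unfold ellipticBound
  gcongr

lemma mul_add_one_sub_ellipticBound_self {R : ℝ} (hR : R ≠ 0) (hR' : R + 1 ≠ 0) :
    R * (R + 1) - ellipticBound R R =
      (R ^ 6 + R ^ 5 - 4 * R ^ 4 - 8 * R ^ 3 - 10 * R ^ 2 - 6 * R - 2) / R ^ 4 := by
  unfold ellipticBound
  field_simp
  ring

-- Where the common denominator of `α` and `β` vanishes, division by `0` makes both sides `0`.
lemma quadratic_alphaF_betaF_eq_mul_sub_ellipticBound {x y : ℝ} (hx : x + 1 ≠ 0) (hy : y ≠ 0) :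
    2 * (alphaF x y) ^ 2 + 3 * (betaF x y) ^ 2 - 4 * (alphaF x y) * (betaF x y)
        - 2 * (alphaF x y) + 2 * (betaF x y) =
      x * (x + 1) ^ 3 * y ^ 4 / ((y + 1) * (3 * x ^ 2 * y + 4 * x * y + 2 * x + y + 1)) ^ 2 *
        (x * (x + 1) - ellipticBound x y) := by
  unfold alphaF betaF ellipticBound
  field_simp
  ring

lemma quadratic_alphaF_betaF_neg_iff {x y : ℝ} (hx : 0 < x) (hy : 0 < y) :
    2 * (alphaF x y) ^ 2 + 3 * (betaF x y) ^ 2 - 4 * (alphaF x y) * (betaF x y)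
        - 2 * (alphaF x y) + 2 * (betaF x y) < 0 ↔ x * (x + 1) < ellipticBound x y := by
  have hfactor : 0 < x * (x + 1) ^ 3 * y ^ 4 /
      ((y + 1) * (3 * x ^ 2 * y + 4 * x * y + 2 * x + y + 1)) ^ 2 := by
    positivity
  rw [quadratic_alphaF_betaF_eq_mul_sub_ellipticBound (by positivity) hy.ne',
    ← sub_neg (a := x * (x + 1))]
  exact smul_neg_iff_of_pos_left hfactor

/-- Lemma A.3: if `R₃` is the unique positive root of `R⁶+R⁵-4R⁴-8R³-10R²-6R-2 = 0`
(`R₃ ≈ 2.553`), then `2α² + 3β² - 4αβ - 2α + 2β < 0` for all `0 < x < R₃`, `0 < y < R₃`. -/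
theorem elliptic_inequality (R3 : ℝ) (hpos : 0 < R3)
    (hroot : R3^6 + R3^5 - 4*R3^4 - 8*R3^3 - 10*R3^2 - 6*R3 - 2 = 0)
    (huniq : ∀ x : ℝ, 0 < x → x^6 + x^5 - 4*x^4 - 8*x^3 - 10*x^2 - 6*x - 2 = 0 → x = R3) :
    ∀ x y : ℝ, 0 < x → x < R3 → 0 < y → y < R3 →
      2*(alphaF x y)^2 + 3*(betaF x y)^2 - 4*(alphaF x y)*(betaF x y)
        - 2*(alphaF x y) + 2*(betaF x y) < 0 := by
  intro x y hx hxR hy hyR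
  have hcorner : R3 * (R3 + 1) = ellipticBound R3 R3 := by
    rw [← sub_eq_zero, mul_add_one_sub_ellipticBound_self hpos.ne' (by positivity), hroot, zero_div]
  rw [quadratic_alphaF_betaF_neg_iff hx hy]
  calc x * (x + 1) < R3 * (R3 + 1) := by gcongr
    _ = ellipticBound R3 R3 := hcorner
    _ ≤ ellipticBound x y := ellipticBound_le_ellipticBound (by linarith) hxR.le hy hyR.le
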